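/- arXiv:2104.11910 — 4 statements merged into one kernel-verified Lean document; each statement's English description precedes it below -/
import Mathlib

section
/- Let G be a finite simple graph on n vertices. If k ≥ χ(G), then ϑ_k(G) = n. Moreover, for every k ≥ 1, ϑ_k(G) ≤ min{k·ϑ(G), n}. -/
open Finset

/-- The sum of the `k` largest eigenvalues (counted with multiplicity) of a
Hermitian real matrix, realized as the supremum over all choices of
`min k n` eigenvalues of their sum. -/
noncomputable def sumKEig {V : Type*} [Fintype V] [DecidableEq V] (k : ℕ)
    (A : Matrix V V ℝ) (hA : A.IsHermitian) : ℝ :=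
  sSup {x : ℝ | ∃ s : Finset V, s.card = min k (Fintype.card V) ∧
    x = ∑ i ∈ s, hA.eigenvalues i}

/-- The generalized theta number `ϑ_k(G)`: the infimum of the sum of the `k`
largest eigenvalues over all real symmetric matrices `A` with `A i j = 1`
whenever `(i,j)` is not an edge of `G`. -/
noncomputable def gtheta {V : Type*} [Fintype V] [DecidableEq V]
    (k : ℕ) (G : SimpleGraph V) : ℝ :=
  sInf {x : ℝ | ∃ (A : Matrix V V ℝ) (hA : A.IsHermitian),
    (∀ i j, ¬ G.Adj i j → A i j = 1) ∧ x = sumKEig k A hA}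

lemma weight_le {V : Type*} [Fintype V] [DecidableEq V] (f W : V → ℝ) (m : ℕ)
    (s : Finset V) (hs : s.card = m)
    (hmax : ∀ t : Finset V, t.card = m → ∑ i ∈ t, f i ≤ ∑ i ∈ s, f i)
    (h0 : ∀ i, 0 ≤ W i) (h1 : ∀ i, W i ≤ 1) (hW : ∑ i, W i = m) :
    ∑ i, W i * f i ≤ ∑ i ∈ s, f i := by
  rcases s.eq_empty_or_nonempty with rfl | hne
  · have hm : m = 0 := by simpa using hs.symm
    subst hm
    have hz : ∀ i, W i = 0 := by
      intro i
      have := (Finset.sum_eq_zero_iff_of_nonneg (s := Finset.univ) (fun i _ => h0 i)).1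
        (by simpa using hW)
      exact this i (Finset.mem_univ i)
    simp [hz]
  · obtain ⟨a, ha, hmin⟩ := s.exists_min_image f hne
    have hout : ∀ j, j ∉ s → f j ≤ f a := by
      intro j hj
      have hj' : j ∉ s.erase a := fun h => hj (Finset.mem_of_mem_erase h)
      have hc : (insert j (s.erase a)).card = m := by
        rw [Finset.card_insert_of_notMem hj', Finset.card_erase_add_one ha, hs]
      have := hmax _ hc
      rw [Finset.sum_insert hj', ← Finset.add_sum_erase s f ha] at this
      linarith
    have key : ∀ i, W i * f i ≤ (if i ∈ s then f i else 0) + f a * (W i - if i ∈ s then 1 else 0) := by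
      intro i
      by_cases hi : i ∈ s
      · simp only [hi, if_true]
        nlinarith [hmin i hi, h1 i]
      · simp only [hi, if_false]
        nlinarith [hout i hi, h0 i]
    have := Finset.sum_le_sum (fun i (_ : i ∈ Finset.univ) => key i)
    rw [Finset.sum_add_distrib, ← Finset.mul_sum, Finset.sum_sub_distrib, hW] at this
    simpa [hs] using this

lemma sumK_bdd {V : Type*} [Fintype V] [DecidableEq V] (f : V → ℝ) (m : ℕ) :
    BddAbove {x : ℝ | ∃ s : Finset V, s.card = m ∧ x = ∑ i ∈ s, f i} := by
  refine Set.Finite.bddAbove (Set.Finite.subset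
    (Set.finite_range (fun s : Finset V => ∑ i ∈ s, f i)) ?_)
  rintro x ⟨s, -, rfl⟩
  exact ⟨s, rfl⟩

lemma sumKEig_le {V : Type*} [Fintype V] [DecidableEq V] (k : ℕ)
    (A : Matrix V V ℝ) (hA : A.IsHermitian) (b : ℝ)
    (h : ∀ s : Finset V, s.card = min k (Fintype.card V) → ∑ i ∈ s, hA.eigenvalues i ≤ b) :
    sumKEig k A hA ≤ b := by
  apply csSup_le
  · obtain ⟨s, -, hs⟩ := Finset.exists_subset_card_eq
      (s := (Finset.univ : Finset V)) (n := min k (Fintype.card V)) (by simp)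
    exact ⟨_, s, hs, rfl⟩
  · rintro x ⟨s, hs, rfl⟩
    exact h s hs

lemma le_sumKEig {V : Type*} [Fintype V] [DecidableEq V] (k : ℕ)
    (A : Matrix V V ℝ) (hA : A.IsHermitian)
    (s : Finset V) (hs : s.card = min k (Fintype.card V)) :
    ∑ i ∈ s, hA.eigenvalues i ≤ sumKEig k A hA :=
  le_csSup (sumK_bdd _ _) ⟨s, hs, rfl⟩

lemma quad_form {V : Type*} [Fintype V] [DecidableEq V]
    (A : Matrix V V ℝ) (hA : A.IsHermitian) (v : EuclideanSpace ℝ V) :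
    v.ofLp ⬝ᵥ (A.mulVec v.ofLp) =
      ∑ i, (inner ℝ v (hA.eigenvectorBasis i)) ^ 2 * hA.eigenvalues i := by
  have h1 := hA.eigenvectorBasis.sum_inner_mul_inner v (WithLp.toLp 2 (A.mulVec v.ofLp))
  have h2 : inner ℝ v (WithLp.toLp 2 (A.mulVec v.ofLp)) = v.ofLp ⬝ᵥ (A.mulVec v.ofLp) := by
    rw [EuclideanSpace.inner_eq_star_dotProduct, dotProduct_comm]; simp
  rw [← h2, ← h1]
  refine Finset.sum_congr rfl fun i _ => ?_
  have h3 : inner ℝ (hA.eigenvectorBasis i) (WithLp.toLp 2 (A.mulVec v.ofLp))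
      = hA.eigenvalues i * inner ℝ v (hA.eigenvectorBasis i) := by
    rw [EuclideanSpace.inner_eq_star_dotProduct, EuclideanSpace.inner_eq_star_dotProduct]
    simp only [star_trivial]
    have ht : Matrix.transpose A = A := by simpa using hA.eq
    rw [dotProduct_comm, Matrix.dotProduct_mulVec, ← Matrix.mulVec_transpose, ht,
      hA.mulVec_eigenvectorBasis, smul_dotProduct, smul_eq_mul]
  rw [h3]; ring

lemma ky_fan {V : Type*} [Fintype V] [DecidableEq V] (k : ℕ)
    (A : Matrix V V ℝ) (hA : A.IsHermitian) {ι : Type*} [Fintype ι]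
    (hι : Fintype.card ι = min k (Fintype.card V))
    (v : ι → EuclideanSpace ℝ V) (hv : Orthonormal ℝ v) :
    ∑ t, (v t).ofLp ⬝ᵥ (A.mulVec (v t).ofLp) ≤ sumKEig k A hA := by
  obtain ⟨s, hs, hmax⟩ := Finset.exists_max_image
    (Finset.powersetCard (min k (Fintype.card V)) (Finset.univ : Finset V))
    (fun s => ∑ i ∈ s, hA.eigenvalues i) (by
      rw [Finset.powersetCard_nonempty]; simp)
  have hs' := (Finset.mem_powersetCard.1 hs).2
  refine le_trans ?_ (le_sumKEig k A hA s hs')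
  have := weight_le hA.eigenvalues (fun i => ∑ t, (inner ℝ (v t) (hA.eigenvectorBasis i)) ^ 2)
    (min k (Fintype.card V)) s hs'
    (fun t ht => hmax t (Finset.mem_powersetCard.2 ⟨Finset.subset_univ _, ht⟩))
    (fun i => Finset.sum_nonneg fun _ _ => sq_nonneg _)
    (fun i => by
      have := hv.sum_inner_products_le (hA.eigenvectorBasis i) (s := Finset.univ)
      simpa using this)
    (by
      rw [Finset.sum_comm]
      have : ∀ t, ∑ i, (inner ℝ (v t) (hA.eigenvectorBasis i)) ^ 2 = (1 : ℝ) := by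
        intro t
        have h := hA.eigenvectorBasis.sum_sq_norm_inner_left (v t)
        simpa [hv.1 t] using h
      simp only [this]
      simp [hι])
  refine le_trans (le_of_eq ?_) this
  simp only [quad_form A hA, Finset.sum_mul]
  exact Finset.sum_comm

lemma idem_bound {V : Type*} [Fintype V] [DecidableEq V] (k : ℕ) (G : SimpleGraph V)
    (A : Matrix V V ℝ) (hA : A.IsHermitian) (hG : ∀ i j, ¬ G.Adj i j → A i j = 1)
    (T : Finset V) (hT : T.card = min k (Fintype.card V)) (g : V → V)
    (hgT : ∀ x, g x ∈ T) (hg : ∀ x ∈ T, g x = x)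
    (hind : ∀ x y, g x = g y → ¬ G.Adj x y) :
    (Fintype.card V : ℝ) ≤ sumKEig k A hA := by
  set c : V → ℝ := fun t => ((Finset.univ.filter (fun x => g x = t)).card : ℝ) with hc
  have hcpos : ∀ t ∈ T, 0 < c t := by
    intro t ht
    simp only [hc, Nat.cast_pos, Finset.card_pos]
    exact ⟨t, by simp [hg t ht]⟩
  let v : T → EuclideanSpace ℝ V := fun t =>
    WithLp.toLp 2 (fun x => if g x = t then (Real.sqrt (c t))⁻¹ else 0)
  have hsq : ∀ t : T, (Real.sqrt (c t))⁻¹ * (Real.sqrt (c t))⁻¹ = (c t)⁻¹ := by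
    intro t
    rw [← mul_inv, Real.mul_self_sqrt (hcpos t t.2).le]
  have hv : Orthonormal ℝ v := by
    rw [orthonormal_iff_ite]
    intro s t
    rw [EuclideanSpace.inner_eq_star_dotProduct]
    simp only [star_trivial, v, dotProduct]
    split_ifs with hst
    · subst hst
      have : ∀ x, ((if g x = s then (Real.sqrt (c s))⁻¹ else 0) *
          (if g x = s then (Real.sqrt (c s))⁻¹ else 0)) = if g x = s then (c s)⁻¹ else 0 := by
        intro x
        split_ifs
        · exact hsq s
        · simp
      simp only [this]
      rw [← Finset.sum_filter, Finset.sum_const, nsmul_eq_mul]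
      exact mul_inv_cancel₀ (hcpos s s.2).ne'
    · refine Finset.sum_eq_zero fun x _ => ?_
      by_cases h1 : g x = t
      · have h2 : g x ≠ s := fun h => hst (Subtype.ext (h.symm.trans h1))
        simp [h2]
      · simp [h1]
  have hk := ky_fan k A hA (ι := T) (by simpa using hT) v hv
  refine le_trans (le_of_eq ?_) hk
  have hq : ∀ t : T, (v t).ofLp ⬝ᵥ (A.mulVec (v t).ofLp) = c t := by
    intro t
    simp only [v, dotProduct, Matrix.mulVec, Finset.mul_sum]
    have : ∀ x y, ((if g x = t then (Real.sqrt (c t))⁻¹ else 0) *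
          (A x y * (if g y = t then (Real.sqrt (c t))⁻¹ else 0))) =
          if g x = t then (if g y = t then (c t)⁻¹ else 0) else 0 := by
      intro x y
      split_ifs with h1 h2
      · rw [hG x y (hind x y (h1.trans h2.symm)), one_mul, hsq]
      · simp
      · simp
      · simp
    simp only [this]
    have h3 : ∀ x, (∑ y, if g x = t then (if g y = t then (c t)⁻¹ else 0) else 0)
        = if g x = t then (1 : ℝ) else 0 := by
      intro x
      split_ifs
      · rw [← Finset.sum_filter, Finset.sum_const, nsmul_eq_mul]
        exact mul_inv_cancel₀ (hcpos t t.2).ne'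
      · simp
    simp only [h3]
    simp [hc]
  simp only [hq]
  rw [Finset.sum_coe_sort T c]
  have := Finset.card_eq_sum_card_fiberwise (s := (Finset.univ : Finset V)) (t := T) (f := g)
    (fun x _ => hgT x)
  rw [Finset.card_univ] at this
  rw [this]; push_cast; rfl

lemma color_bound {V : Type*} [Fintype V] [DecidableEq V] (k : ℕ) (G : SimpleGraph V)
    (A : Matrix V V ℝ) (hA : A.IsHermitian) (hG : ∀ i j, ¬ G.Adj i j → A i j = 1)
    (C : G.Coloring (Fin k)) :
    (Fintype.card V : ℝ) ≤ sumKEig k A hA := by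
  classical
  let rep : V → V := fun x =>
    Classical.choose (⟨x, rfl⟩ : ∃ y, C y = C x)
  have hrep : ∀ x, C (rep x) = C x := fun x =>
    Classical.choose_spec (⟨x, rfl⟩ : ∃ y, C y = C x)
  have hrep2 : ∀ x y, C x = C y → rep x = rep y := by
    intro x y h
    simp only [rep, h]
  have hcard : (Finset.univ.image rep).card ≤ min k (Fintype.card V) := by
    refine le_min ?_ (Finset.card_le_univ _)
    have : Set.InjOn C (Finset.univ.image rep : Finset V) := by
      intro a ha b hb hab
      simp only [Finset.coe_image, Finset.coe_univ, Set.image_univ, Set.mem_range] at ha hb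
      obtain ⟨x, rfl⟩ := ha
      obtain ⟨y, rfl⟩ := hb
      rw [hrep, hrep] at hab
      exact hrep2 x y hab
    rw [← Finset.card_image_of_injOn this]
    exact (Finset.card_le_univ _).trans (by simp)
  obtain ⟨T, hT1, -, hT⟩ := Finset.exists_subsuperset_card_eq
    (Finset.subset_univ (Finset.univ.image rep)) hcard (by simp)
  have hcol : ∀ x, C (if x ∈ T then x else rep x) = C x := by
    intro x
    split_ifs
    · rfl
    · exact hrep x
  refine idem_bound k G A hA hG T hT (fun x => if x ∈ T then x else rep x) ?_ ?_ ?_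
  · intro x
    by_cases h : x ∈ T
    · simp [h]
    · simp only [h, if_false]
      exact hT1 (by simp)
  · intro x hx
    simp [hx]
  · intro x y hxy hadj
    apply C.valid hadj
    rw [← hcol x, ← hcol y]
    exact congrArg C hxy

lemma sumKEig_nonneg {V : Type*} [Fintype V] [DecidableEq V] (k : ℕ) (G : SimpleGraph V)
    (A : Matrix V V ℝ) (hA : A.IsHermitian) (hG : ∀ i j, ¬ G.Adj i j → A i j = 1) :
    0 ≤ sumKEig k A hA := by
  obtain ⟨s, -, hs⟩ := Finset.exists_subset_card_eq
      (s := (Finset.univ : Finset V)) (n := min k (Fintype.card V)) (by simp)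
  have hv := (EuclideanSpace.basisFun V ℝ).orthonormal.comp (Subtype.val : s → V)
    Subtype.val_injective
  refine le_trans ?_ (ky_fan k A hA (ι := s) (by simpa using hs) _ hv)
  refine Finset.sum_nonneg fun t _ => ?_
  simp [hG t t (G.irrefl)]

lemma gtheta_le {V : Type*} [Fintype V] [DecidableEq V] (k : ℕ) (G : SimpleGraph V)
    (A : Matrix V V ℝ) (hA : A.IsHermitian) (hG : ∀ i j, ¬ G.Adj i j → A i j = 1) :
    gtheta k G ≤ sumKEig k A hA := by
  refine csInf_le ⟨0, ?_⟩ ⟨A, hA, hG, rfl⟩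
  rintro x ⟨B, hB, h, rfl⟩
  exact sumKEig_nonneg k G B hB h

lemma ones_herm {V : Type*} [Fintype V] [DecidableEq V] :
    (Matrix.of (fun _ _ : V => (1 : ℝ))).IsHermitian := by
  ext i j; simp

lemma le_gtheta {V : Type*} [Fintype V] [DecidableEq V] (k : ℕ) (G : SimpleGraph V) (b : ℝ)
    (h : ∀ (A : Matrix V V ℝ) (hA : A.IsHermitian), (∀ i j, ¬ G.Adj i j → A i j = 1) →
      b ≤ sumKEig k A hA) : b ≤ gtheta k G := by
  apply le_csInf
  · exact ⟨_, _, ones_herm, fun _ _ _ => rfl, rfl⟩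
  · rintro x ⟨A, hA, h1, rfl⟩
    exact h A hA h1

lemma gtheta_le_card {V : Type*} [Fintype V] [DecidableEq V] (k : ℕ) (G : SimpleGraph V) :
    gtheta k G ≤ Fintype.card V := by
  refine (gtheta_le k G _ ones_herm fun _ _ _ => rfl).trans ?_
  refine sumKEig_le _ _ _ _ fun s _ => ?_
  have hpsd : (Matrix.of (fun _ _ : V => (1 : ℝ))).PosSemidef := by
    have : (Matrix.of (fun _ _ : V => (1 : ℝ))) =
        Matrix.vecMulVec (fun _ => 1) (star (fun _ => 1)) := by
      ext i j; simp [Matrix.vecMulVec]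
    rw [this]
    exact Matrix.posSemidef_vecMulVec_self_star _
  have htr := (ones_herm (V := V)).trace_eq_sum_eigenvalues
  have h1 : (Matrix.of (fun _ _ : V => (1 : ℝ))).trace = Fintype.card V := by
    simp [Matrix.trace]
  rw [h1] at htr
  rw [htr]
  exact Finset.sum_le_sum_of_subset_of_nonneg (Finset.subset_univ _)
    (fun i _ _ => hpsd.eigenvalues_nonneg i)

lemma sumK_le_mul {V : Type*} [Fintype V] [DecidableEq V] (k : ℕ) (G : SimpleGraph V)
    (A : Matrix V V ℝ) (hA : A.IsHermitian) (hG : ∀ i j, ¬ G.Adj i j → A i j = 1) :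
    sumKEig k A hA ≤ k * sumKEig 1 A hA := by
  refine sumKEig_le _ _ _ _ fun s hs => ?_
  have h0 := sumKEig_nonneg 1 G A hA hG
  have h1 : ∀ i ∈ s, hA.eigenvalues i ≤ sumKEig 1 A hA := by
    intro i _
    have : 0 < Fintype.card V := Fintype.card_pos_iff.2 ⟨i⟩
    have := le_sumKEig 1 A hA {i} (by rw [Finset.card_singleton]; omega)
    simpa using this
  refine (Finset.sum_le_card_nsmul s _ _ h1).trans ?_
  rw [nsmul_eq_mul]
  refine mul_le_mul_of_nonneg_right ?_ h0
  rw [hs]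
  exact_mod_cast min_le_left _ _

theorem stmt_0 {V : Type*} [Fintype V] [DecidableEq V] (G : SimpleGraph V)
    (n : ℕ) (hn : Fintype.card V = n) :
    (∀ k : ℕ, G.chromaticNumber ≤ (k : ℕ∞) → gtheta k G = (n : ℝ)) ∧
    (∀ k : ℕ, 1 ≤ k → gtheta k G ≤ min ((k : ℝ) * gtheta 1 G) (n : ℝ)) := by
  subst hn
  refine ⟨fun k hk => le_antisymm (gtheta_le_card k G) ?_, fun k hk => le_min ?_ (gtheta_le_card k G)⟩
  · have hc : G.Colorable k := SimpleGraph.chromaticNumber_le_iff_colorable.1 hk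
    obtain ⟨C⟩ := hc
    exact le_gtheta k G _ fun A hA hG => color_bound k G A hA hG C
  · have hk0 : (0 : ℝ) < k := by exact_mod_cast hk
    rw [mul_comm, ← div_le_iff₀ hk0]
    refine le_gtheta 1 G _ fun A hA hG => ?_
    rw [div_le_iff₀ hk0, mul_comm]
    exact (gtheta_le k G A hA hG).trans (sumK_le_mul k G A hA hG)
end

section
/- For the complete graph K_n and every k with 1 ≤ k ≤ n, ϑ_k(K_n) = k. -/
open Finset

/-- Averaging over cyclic shifts: some `k` of the `n` values with total `n` sum to at least `k`. -/
theorem exists_card_sum_ge (n k : ℕ) [NeZero n] (hkn : k ≤ n) (f : Fin n → ℝ)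
    (hf : ∑ i, f i = n) : ∃ s : Finset (Fin n), s.card = k ∧ (k : ℝ) ≤ ∑ i ∈ s, f i := by
  obtain ⟨s, -, hs⟩ := Finset.exists_subset_card_eq (s := (Finset.univ : Finset (Fin n)))
    (n := k) (by simpa using hkn)
  have key : ∑ _j : Fin n, (k : ℝ) ≤ ∑ j : Fin n, ∑ i ∈ s, f (i + j) := by
    rw [Finset.sum_comm]
    have : ∀ i ∈ s, ∑ j : Fin n, f (i + j) = n := by
      intro i _
      rw [← hf]
      exact Equiv.sum_comp (Equiv.addLeft i) f
    rw [Finset.sum_congr rfl this]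
    simp [hs, mul_comm]
  obtain ⟨j, -, hj⟩ := Finset.exists_le_of_sum_le Finset.univ_nonempty key
  refine ⟨s.map (Equiv.addRight j).toEmbedding, by simpa using hs, ?_⟩
  simpa using hj

theorem stmt_6 (n k : ℕ) (hk1 : 1 ≤ k) (hkn : k ≤ n) :
    gtheta k (⊤ : SimpleGraph (Fin n)) = (k : ℝ) := by
  have : NeZero n := ⟨by omega⟩
  have hn : (0 : ℝ) < n := by exact_mod_cast (by omega : 0 < n)
  have lower : ∀ (A : Matrix (Fin n) (Fin n) ℝ) (hA : A.IsHermitian),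
      (∀ i j, ¬ (⊤ : SimpleGraph (Fin n)).Adj i j → A i j = 1) → (k : ℝ) ≤ sumKEig k A hA := by
    intro A hA h
    have htr : ∑ i, hA.eigenvalues i = n := by
      have h1 := hA.trace_eq_sum_eigenvalues
      have h2 : A.trace = n := by
        simp [Matrix.trace, h]
      rw [h2] at h1
      simpa using h1.symm
    obtain ⟨s, hs, hle⟩ := exists_card_sum_ge n k hkn hA.eigenvalues htr
    refine hle.trans (le_csSup ?_ ⟨s, by simpa [hkn] using hs, rfl⟩)
    apply Set.Finite.bddAbove
    refine (Set.finite_range (fun s : Finset (Fin n) => ∑ i ∈ s, hA.eigenvalues i)).subset ?_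
    rintro x ⟨s, -, rfl⟩
    exact ⟨s, rfl⟩
  have hone : sumKEig k (1 : Matrix (Fin n) (Fin n) ℝ) Matrix.isHermitian_one = k := by
    have hev : ∀ i, (Matrix.isHermitian_one : (1 : Matrix (Fin n) (Fin n) ℝ).IsHermitian).eigenvalues i = 1 := by
      intro i
      have := (Matrix.isHermitian_one : (1 : Matrix (Fin n) (Fin n) ℝ).IsHermitian).eigenvalues_mem_spectrum_real i
      rw [spectrum.one_eq] at this
      simpa using this
    unfold sumKEig
    have : {x : ℝ | ∃ s : Finset (Fin n), s.card = min k (Fintype.card (Fin n)) ∧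
        x = ∑ i ∈ s, (Matrix.isHermitian_one : (1 : Matrix (Fin n) (Fin n) ℝ).IsHermitian).eigenvalues i}
        = {(k : ℝ)} := by
      ext x
      simp only [hev, Set.mem_ofPred_eq, Set.mem_singleton_iff, Fintype.card_fin, min_eq_left hkn]
      constructor
      · rintro ⟨s, hs, rfl⟩
        simp [hs]
      · rintro rfl
        obtain ⟨s, -, hs⟩ := Finset.exists_subset_card_eq (s := (Finset.univ : Finset (Fin n)))
          (n := k) (by simpa using hkn)
        exact ⟨s, hs, by simp [hs]⟩
    rw [this, csSup_singleton]
  apply IsLeast.csInf_eq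
  refine ⟨⟨1, Matrix.isHermitian_one, ?_, hone.symm⟩, ?_⟩
  · intro i j hij
    have : i = j := by simpa using hij
    subst this
    exact Matrix.one_apply_eq i
  · rintro x ⟨A, hA, h, rfl⟩
    exact lower A hA h
end

section
/- Let K_{m_1,…,m_p} be the complete multipartite graph with part sizes m_1 ≥ m_2 ≥ … ≥ m_p ≥ 1. Then for every k with 1 ≤ k ≤ p, ϑ_k(K_{m_1,…,m_p}) = m_1 + m_2 + … + m_k. -/
open Finset

lemma aux_thresh {ι : Type*} [Fintype ι] [DecidableEq ι] (f w : ι → ℝ) (s : Finset ι) (t : ℝ)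
    (h1 : ∀ i ∈ s, t ≤ f i) (h2 : ∀ i ∉ s, f i ≤ t) (hw0 : ∀ i, 0 ≤ w i) (hw1 : ∀ i, w i ≤ 1)
    (hw : t * ∑ i, w i ≤ t * s.card) : ∑ i, w i * f i ≤ ∑ i ∈ s, f i := by
  have key : ∀ i, w i * f i - (if i ∈ s then f i else 0) ≤ t * w i - (if i ∈ s then t else 0) := by
    intro i
    by_cases hi : i ∈ s
    · simp only [hi, if_true]
      nlinarith [h1 i hi, hw1 i]
    · simp only [hi, if_false]
      nlinarith [h2 i hi, hw0 i]
  have := Finset.sum_le_sum (fun i (_ : i ∈ Finset.univ) => key i)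
  simp only [Finset.sum_sub_distrib, ← Finset.mul_sum] at this
  simp only [Finset.sum_ite_mem, Finset.univ_inter, Finset.sum_const, nsmul_eq_mul] at this
  linarith

lemma aux_lp {ι : Type*} [Fintype ι] [DecidableEq ι] (f w : ι → ℝ) (k : ℕ) (hk1 : 1 ≤ k)
    (hk : k ≤ Fintype.card ι) (hw0 : ∀ i, 0 ≤ w i) (hw1 : ∀ i, w i ≤ 1)
    (hw : ∑ i, w i = k) : ∃ s : Finset ι, s.card = k ∧ ∑ i, w i * f i ≤ ∑ i ∈ s, f i := by
  have hne : (Finset.powersetCard k (Finset.univ : Finset ι)).Nonempty := by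
    apply Finset.powersetCard_nonempty.2; simpa using hk
  obtain ⟨s, hs, hmax⟩ := Finset.exists_max_image _ (fun s => ∑ i ∈ s, f i) hne
  have hc : s.card = k := (Finset.mem_powersetCard.1 hs).2
  have hsne : s.Nonempty := by rw [← Finset.card_pos]; omega
  obtain ⟨a, ha, hamin⟩ := Finset.exists_min_image s f hsne
  refine ⟨s, hc, aux_thresh f w s (f a) hamin ?_ hw0 hw1 (by rw [hw, hc])⟩
  intro j hj
  have hj' : j ∉ s.erase a := fun h => hj (Finset.mem_of_mem_erase h)
  have := hmax (insert j (s.erase a)) (by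
    rw [Finset.mem_powersetCard]
    refine ⟨Finset.subset_univ _, ?_⟩
    rw [Finset.card_insert_of_notMem hj', Finset.card_erase_of_mem ha]; omega)
  rw [Finset.sum_insert hj', ← Finset.add_sum_erase s f ha] at this
  linarith

lemma aux_quad {V : Type*} [Fintype V] [DecidableEq V] (A : Matrix V V ℝ) (hA : A.IsHermitian)
    (x : EuclideanSpace ℝ V) :
    ∑ a, ∑ b, x a * A a b * x b =
      ∑ j, (inner ℝ (hA.eigenvectorBasis j) x) ^ 2 * hA.eigenvalues j := by
  have h1 : ∑ a, ∑ b, x a * A a b * x b = inner ℝ x (Matrix.toEuclideanLin A x) := by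
    simp only [PiLp.inner_apply, Matrix.toEuclideanLin, RCLike.inner_apply]
    simp [Matrix.mulVec, dotProduct, Finset.sum_mul]
    refine Finset.sum_congr rfl fun a _ => Finset.sum_congr rfl fun b _ => by ring
  have hs := Matrix.isSymmetric_toEuclideanLin_iff.2 hA
  have he : ∀ j, Matrix.toEuclideanLin A (hA.eigenvectorBasis j)
      = hA.eigenvalues j • hA.eigenvectorBasis j := by
    intro j
    ext i
    have := congrFun (hA.mulVec_eigenvectorBasis j) i
    simpa [Matrix.toEuclideanLin] using this
  rw [h1, ← hA.eigenvectorBasis.sum_inner_mul_inner]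
  refine Finset.sum_congr rfl fun j _ => ?_
  rw [← hs, he, real_inner_smul_left, real_inner_comm x]
  ring

/-- normalized indicator vector of part `i` -/
noncomputable def partVec {p : ℕ} (m : Fin p → ℕ) (i : Fin p) :
    EuclideanSpace ℝ ((i : Fin p) × Fin (m i)) :=
  WithLp.toLp 2 (fun v => if v.1 = i then (√(m i : ℝ))⁻¹ else 0)

lemma partVec_inner {p : ℕ} (m : Fin p → ℕ) (i : Fin p)
    (x : EuclideanSpace ℝ ((i : Fin p) × Fin (m i))) :
    inner ℝ (partVec m i) x = (√(m i : ℝ))⁻¹ * ∑ a, x ⟨i, a⟩ := by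
  simp only [PiLp.inner_apply, partVec, RCLike.inner_apply, Fintype.sum_sigma]
  rw [Finset.sum_eq_single i]
  · simp [Finset.mul_sum, mul_comm]
  · intro b _ hb; simp [hb]
  · simp

lemma partVec_orthonormal {p : ℕ} (m : Fin p → ℕ) (hm : ∀ i, 1 ≤ m i) :
    Orthonormal ℝ (partVec m) := by
  rw [orthonormal_iff_ite]
  intro i j
  rw [partVec_inner]
  by_cases h : i = j
  · subst h
    have : (0 : ℝ) < m i := by exact_mod_cast hm i
    have h2 := Real.mul_self_sqrt this.le
    have h3 : 0 < √(m i : ℝ) := Real.sqrt_pos.2 this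
    simp [partVec]
    field_simp
    nlinarith
  · simp [partVec, h]

lemma part_bessel {ι V : Type*} [Fintype V] [Fintype ι] {u : ι → EuclideanSpace ℝ V}
    (hu : Orthonormal ℝ u) (s : Finset ι) (x : EuclideanSpace ℝ V) (hx : ‖x‖ = 1) :
    ∑ i ∈ s, (inner ℝ (u i) x) ^ 2 ≤ 1 := by
  have := hu.sum_inner_products_le x (s := s)
  simpa [hx] using this

lemma sumKEig_ge {V : Type*} [Fintype V] [DecidableEq V] (k : ℕ)
    (A : Matrix V V ℝ) (hA : A.IsHermitian) (hk : k ≤ Fintype.card V) (s : Finset V)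
    (hs : s.card = k) : ∑ i ∈ s, hA.eigenvalues i ≤ sumKEig k A hA := by
  apply le_csSup
  · apply Set.Finite.bddAbove
    apply (Set.finite_range (fun s : Finset V => ∑ i ∈ s, hA.eigenvalues i)).subset
    rintro x ⟨s, -, rfl⟩
    exact ⟨s, rfl⟩
  · exact ⟨s, by rw [hs, min_eq_left hk], rfl⟩

lemma card_ge {p : ℕ} (m : Fin p → ℕ) (hm : ∀ i, 1 ≤ m i) :
    p ≤ Fintype.card ((i : Fin p) × Fin (m i)) := by
  simp only [Fintype.card_sigma, Fintype.card_fin]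
  calc p = ∑ i : Fin p, 1 := by simp
    _ ≤ _ := Finset.sum_le_sum fun i _ => hm i

lemma card_filter_lt {p k : ℕ} (hkp : k ≤ p) :
    (Finset.univ.filter (fun i : Fin p => i.val < k)).card = k := by
  rw [Fin.card_filter_val_lt]; exact min_eq_right hkp

lemma lower {p : ℕ} (m : Fin p → ℕ) (hm : ∀ i, 1 ≤ m i) (k : ℕ) (hk1 : 1 ≤ k) (hkp : k ≤ p)
    (A : Matrix ((i : Fin p) × Fin (m i)) ((i : Fin p) × Fin (m i)) ℝ) (hA : A.IsHermitian)
    (h : ∀ i j, ¬ (SimpleGraph.completeMultipartiteGraph (fun i : Fin p => Fin (m i))).Adj i j →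
      A i j = 1) :
    ∑ i ∈ Finset.univ.filter (fun i : Fin p => i.val < k), (m i : ℝ) ≤ sumKEig k A hA := by
  set S := Finset.univ.filter (fun i : Fin p => i.val < k) with hS
  have hu := partVec_orthonormal m hm
  have hk := hkp.trans (card_ge m hm)
  obtain ⟨s, hs, hle⟩ := aux_lp hA.eigenvalues
    (fun j => ∑ i ∈ S, (inner ℝ (hA.eigenvectorBasis j) (partVec m i)) ^ 2) k hk1 hk
    (fun j => Finset.sum_nonneg fun i _ => sq_nonneg _)
    (fun j => by
      have := part_bessel hu S (hA.eigenvectorBasis j) (hA.eigenvectorBasis.orthonormal.1 j)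
      simpa only [real_inner_comm] using this)
    (by
      rw [Finset.sum_comm]
      have : ∀ i ∈ S, ∑ j, (inner ℝ (hA.eigenvectorBasis j) (partVec m i)) ^ 2 = 1 := by
        intro i _
        have := hA.eigenvectorBasis.sum_sq_norm_inner_right (partVec m i)
        simpa [hu.1 i] using this
      rw [Finset.sum_congr rfl this]
      simp [hS, card_filter_lt hkp])
  refine le_trans (le_of_eq ?_) (hle.trans (sumKEig_ge k A hA hk s hs))
  simp only [Finset.sum_mul]
  rw [Finset.sum_comm]
  refine Finset.sum_congr rfl fun i _ => ?_
  rw [← aux_quad]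
  have hpos : (0 : ℝ) < m i := by exact_mod_cast hm i
  have h2 := Real.mul_self_sqrt hpos.le
  have h3 : 0 < √(m i : ℝ) := Real.sqrt_pos.2 hpos
  have hA1 : ∀ a b : Fin (m i), A ⟨i, a⟩ ⟨i, b⟩ = 1 := fun a b => h _ _ (by simp)
  simp only [Fintype.sum_sigma]
  rw [Finset.sum_eq_single i]
  · have : ∀ a : Fin (m i), ∑ i', ∑ b : Fin (m i'), partVec m i ⟨i, a⟩ * A ⟨i, a⟩ ⟨i', b⟩ *
        partVec m i ⟨i', b⟩ = 1 := by
      intro a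
      rw [Finset.sum_eq_single i]
      · simp only [hA1]
        simp [partVec]
        field_simp
        nlinarith
      · intro b _ hb; simp [partVec, hb]
      · simp
    simp [this]
  · intro b _ hb; simp [partVec, hb]
  · simp

/-- the optimal block matrix -/
def blockA {p : ℕ} (m : Fin p → ℕ) :
    Matrix ((i : Fin p) × Fin (m i)) ((i : Fin p) × Fin (m i)) ℝ :=
  fun v w => if v.1 = w.1 then 1 else 0

lemma blockA_herm {p : ℕ} (m : Fin p → ℕ) : (blockA m).IsHermitian := by
  ext v w; simp [blockA, eq_comm]

lemma blockA_quad {p : ℕ} (m : Fin p → ℕ) (hm : ∀ i, 1 ≤ m i)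
    (x : EuclideanSpace ℝ ((i : Fin p) × Fin (m i))) :
    ∑ a, ∑ b, x a * blockA m a b * x b = ∑ i, (inner ℝ (partVec m i) x) ^ 2 * (m i : ℝ) := by
  rw [Fintype.sum_sigma]
  refine Finset.sum_congr rfl fun i _ => ?_
  have hpos : (0 : ℝ) < m i := by exact_mod_cast hm i
  have : ∀ a : Fin (m i), ∑ b, x ⟨i, a⟩ * blockA m ⟨i, a⟩ b * x b
      = x ⟨i, a⟩ * ∑ b, x ⟨i, b⟩ := by
    intro a
    rw [Fintype.sum_sigma, Finset.sum_eq_single i]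
    · simp [blockA, Finset.mul_sum]
    · intro b _ hb; simp [blockA, hb.symm]
    · simp
  simp only [this, ← Finset.sum_mul]
  rw [partVec_inner, mul_pow, inv_pow, Real.sq_sqrt hpos.le]
  field_simp

lemma upper {p : ℕ} (m : Fin p → ℕ) (hm : ∀ i, 1 ≤ m i)
    (hmono : Antitone m) (k : ℕ) (hk1 : 1 ≤ k) (hkp : k ≤ p) :
    sumKEig k (blockA m) (blockA_herm m) ≤
      ∑ i ∈ Finset.univ.filter (fun i : Fin p => i.val < k), (m i : ℝ) := by
  have hu := partVec_orthonormal m hm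
  have hk := hkp.trans (card_ge m hm)
  set hA := blockA_herm m
  apply csSup_le
  · obtain ⟨s, -, hs⟩ := Finset.exists_subset_card_eq 
      (s := (Finset.univ : Finset ((i : Fin p) × Fin (m i)))) (n := k)
      (by rw [Finset.card_univ]; exact hk)
    exact ⟨_, s, by rw [hs, min_eq_left hk], rfl⟩
  rintro x ⟨s, hs, rfl⟩
  rw [min_eq_left hk] at hs
  have hev : ∀ j, hA.eigenvalues j =
      ∑ i, (inner ℝ (partVec m i) (hA.eigenvectorBasis j)) ^ 2 * (m i : ℝ) := by
    intro j
    rw [← blockA_quad m hm, aux_quad _ hA]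
    simp [orthonormal_iff_ite.1 hA.eigenvectorBasis.orthonormal]
  simp only [hev]
  rw [Finset.sum_comm]
  simp only [← Finset.sum_mul]
  have hb : ∀ i : Fin p,
      ∑ j ∈ s, (inner ℝ (partVec m i) (hA.eigenvectorBasis j)) ^ 2 ≤ 1 := by
    intro i
    have := part_bessel hA.eigenvectorBasis.orthonormal s (partVec m i) (hu.1 i)
    simpa only [real_inner_comm] using this
  apply aux_thresh (fun i => (m i : ℝ)) _ _ (m ⟨k - 1, by omega⟩ : ℝ)
  · intro i hi
    have hi : i.val < k := by simpa using hi
    have : m ⟨k - 1, by omega⟩ ≤ m i := hmono (by rw [Fin.le_def]; simp; omega)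
    exact_mod_cast this
  · intro i hi
    have hi : ¬ i.val < k := by simpa using hi
    have : m i ≤ m ⟨k - 1, by omega⟩ := hmono (by rw [Fin.le_def]; simp; omega)
    exact_mod_cast this
  · exact fun i => Finset.sum_nonneg fun j _ => sq_nonneg _
  · exact hb
  · apply mul_le_mul_of_nonneg_left _ (Nat.cast_nonneg _)
    rw [card_filter_lt hkp, Finset.sum_comm]
    calc _ ≤ ∑ j ∈ s, (1 : ℝ) := Finset.sum_le_sum fun j _ =>
          part_bessel hu Finset.univ _ (hA.eigenvectorBasis.orthonormal.1 j)
      _ = k := by simp [hs]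

theorem stmt_8 (p : ℕ) (m : Fin p → ℕ) (hm : ∀ i, 1 ≤ m i)
    (hmono : Antitone m) (k : ℕ) (hk1 : 1 ≤ k) (hkp : k ≤ p) :
    gtheta k (SimpleGraph.completeMultipartiteGraph (fun i : Fin p => Fin (m i))) =
      ∑ i ∈ Finset.univ.filter (fun i : Fin p => i.val < k), (m i : ℝ) := by
  have hmem : ∀ i j, ¬ (SimpleGraph.completeMultipartiteGraph
      (fun i : Fin p => Fin (m i))).Adj i j → blockA m i j = 1 := by
    intro i j hij
    have : i.1 = j.1 := by simpa using hij
    simp [blockA, this]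
  apply le_antisymm
  · refine le_trans (csInf_le ?_ ⟨blockA m, blockA_herm m, hmem, rfl⟩)
      (upper m hm hmono k hk1 hkp)
    refine ⟨∑ i ∈ Finset.univ.filter (fun i : Fin p => i.val < k), (m i : ℝ), ?_⟩
    rintro x ⟨A, hA, h, rfl⟩
    exact lower m hm k hk1 hkp A hA h
  · refine le_csInf (Set.nonempty_of_mem ⟨blockA m, blockA_herm m, hmem, rfl⟩) ?_
    rintro x ⟨A, hA, h, rfl⟩
    exact lower m hm k hk1 hkp A hA h
end

section
/- For every real number M ≥ 0, there exist a finite simple graph G and a positive integer k such that ϑ_k(G) − ϑ(K_k □ G) ≥ M, where K_k □ G is the Cartesian product of the complete graph K_k with G. -/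
open Finset

lemma sumKEig_bdd {V : Type*} [Fintype V] [DecidableEq V] (k : ℕ)
    (A : Matrix V V ℝ) (hA : A.IsHermitian) :
    BddAbove {x : ℝ | ∃ s : Finset V, s.card = min k (Fintype.card V) ∧
      x = ∑ i ∈ s, hA.eigenvalues i} := by
  apply Set.Finite.bddAbove
  apply (Set.finite_range (fun s : Finset V => ∑ i ∈ s, hA.eigenvalues i)).subset
  rintro x ⟨s, _, rfl⟩
  exact ⟨s, rfl⟩

/-- fractional top-two bound -/
lemma top_two {V : Type*} [Fintype V] [DecidableEq V] (l y : V → ℝ)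
    (hc : 2 ≤ Fintype.card V) (h0 : ∀ i, 0 ≤ y i) (h1 : ∀ i, y i ≤ 1)
    (hs : ∑ i, y i = 2) :
    ∃ s : Finset V, s.card = 2 ∧ ∑ i, l i * y i ≤ ∑ i ∈ s, l i := by
  have hne : (univ : Finset V).Nonempty := by
    rw [← Finset.card_pos, Finset.card_univ]; omega
  obtain ⟨i, _, hi⟩ := Finset.exists_max_image univ l hne
  have hne2 : (univ.erase i : Finset V).Nonempty := by
    rw [← Finset.card_pos, Finset.card_erase_of_mem (mem_univ i), Finset.card_univ]; omega
  obtain ⟨j, hj, hj2⟩ := Finset.exists_max_image (univ.erase i) l hne2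
  have hij : i ≠ j := (Finset.ne_of_mem_erase hj).symm
  refine ⟨{i, j}, Finset.card_pair hij, ?_⟩
  rw [Finset.sum_pair hij, ← Finset.add_sum_erase univ _ (mem_univ i)]
  rw [← Finset.add_sum_erase univ _ (mem_univ i)] at hs
  have : ∑ x ∈ univ.erase i, l x * y x ≤ l j * ∑ x ∈ univ.erase i, y x := by
    rw [Finset.mul_sum]
    exact Finset.sum_le_sum fun x hx => mul_le_mul_of_nonneg_right (hj2 x hx) (h0 x)
  have e : ∑ x ∈ univ.erase i, y x = 2 - y i := by linarith
  rw [e] at this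
  nlinarith [mul_nonneg (sub_nonneg.2 (h1 i)) (sub_nonneg.2 (hi j (mem_univ j)))]

lemma weak_duality {V : Type*} [Fintype V] [DecidableEq V]
    (A : Matrix V V ℝ) (hA : A.IsHermitian) (Y : Matrix V V ℝ)
    (hc : 2 ≤ Fintype.card V) (hY : Y.PosSemidef) (hY1 : (1 - Y).PosSemidef)
    (ht : Y.trace = 2) : (A * Y).trace ≤ sumKEig 2 A hA := by
  set U : Matrix V V ℝ := (hA.eigenvectorUnitary : Matrix V V ℝ) with hU
  have hUU : U.conjTranspose * U = 1 := by
    have := Matrix.mem_unitaryGroup_iff'.1 hA.eigenvectorUnitary.2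
    simpa [Matrix.star_eq_conjTranspose] using this
  have hUU' : U * U.conjTranspose = 1 := mul_eq_one_comm.1 hUU
  have hspec : A = U * Matrix.diagonal hA.eigenvalues * U.conjTranspose := by
    have := hA.spectral_theorem
    rw [Unitary.conjStarAlgAut_apply] at this
    simpa [Matrix.star_eq_conjTranspose, Function.comp_def] using this
  set Z := U.conjTranspose * Y * U with hZ
  have hZ0 : Z.PosSemidef := hY.conjTranspose_mul_mul_same U
  have hZ1 : (1 - Z).PosSemidef := by
    have := hY1.conjTranspose_mul_mul_same U
    rwa [Matrix.mul_sub, Matrix.sub_mul, Matrix.mul_one, hUU] at this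
  have htr : ∑ i, Z i i = 2 := by
    change Z.trace = 2
    rw [hZ, Matrix.trace_mul_comm, ← Matrix.mul_assoc, hUU', Matrix.one_mul, ht]
  obtain ⟨s, hs, hle⟩ := top_two hA.eigenvalues (fun i => Z i i) hc
    (fun i => hZ0.diag_nonneg) (fun i => by
      have := hZ1.diag_nonneg (i := i)
      simp at this; linarith) htr
  have e : (A * Y).trace = ∑ i, hA.eigenvalues i * Z i i := by
    have : (A * Y).trace = (Matrix.diagonal hA.eigenvalues * Z).trace := by
      conv_lhs => rw [hspec]
      rw [hZ, Matrix.mul_assoc, Matrix.mul_assoc, Matrix.trace_mul_comm]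
      simp only [Matrix.mul_assoc]
    rw [this]
    simp [Matrix.trace, Matrix.diagonal_mul]
  rw [e]
  refine hle.trans (le_sumKEig 2 A hA s ?_)
  rw [hs, min_eq_left hc]

lemma gtheta_nonempty {V : Type*} [Fintype V] [DecidableEq V] (k : ℕ) (G : SimpleGraph V) :
    {x : ℝ | ∃ (A : Matrix V V ℝ) (hA : A.IsHermitian),
    (∀ i j, ¬ G.Adj i j → A i j = 1) ∧ x = sumKEig k A hA}.Nonempty := by
  have h : (Matrix.of fun _ _ => (1:ℝ) : Matrix V V ℝ).IsHermitian := by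
    ext i j; simp
  exact ⟨_, _, h, fun _ _ _ => rfl, rfl⟩

lemma gtheta_one_le {W : Type*} [Fintype W] [DecidableEq W] [Nonempty W]
    (H : SimpleGraph W) (q : ℕ) (f : W → Fin q)
    (hf : ∀ x y, x ≠ y → f x = f y → H.Adj x y) : gtheta 1 H ≤ q := by
  have hcard : 1 ≤ Fintype.card W := Fintype.card_pos
  have hbdd : BddBelow {x : ℝ | ∃ (A : Matrix W W ℝ) (hA : A.IsHermitian),
      (∀ i j, ¬ H.Adj i j → A i j = 1) ∧ x = sumKEig 1 A hA} := by
    refine ⟨0, ?_⟩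
    rintro x ⟨A, hA, h1, rfl⟩
    have htr : A.trace = ∑ i, hA.eigenvalues i := by
      have := hA.trace_eq_sum_eigenvalues
      simpa using this
    by_contra hneg
    push Not at hneg
    have hl : ∀ i, hA.eigenvalues i < 0 := fun i => by
      have := le_sumKEig 1 A hA {i} (by simp; omega)
      simp at this; linarith
    have h2 : A.trace = Fintype.card W := by
      simp [Matrix.trace, h1 _ _ (H.irrefl)]
    have h3 : ∑ i, hA.eigenvalues i ≤ 0 := Finset.sum_nonpos fun i _ => (hl i).le
    have h4 : (1:ℝ) ≤ Fintype.card W := by exact_mod_cast hcard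
    linarith
  let A : Matrix W W ℝ := Matrix.of fun x y =>
    (if x = y then (q:ℝ) else 0) - ((if f x = f y then (q:ℝ) else 0) - 1)
  have hA : A.IsHermitian := by
    ext i j
    simp [A, eq_comm]
  have hmem : ∀ i j, ¬ H.Adj i j → A i j = 1 := by
    intro i j hij
    by_cases h : i = j
    · simp [A, h]
    · have : f i ≠ f j := fun h' => hij (hf i j h h')
      simp [A, h, this]
  refine (csInf_le hbdd ⟨A, hA, hmem, rfl⟩).trans ?_
  have hl : ∀ i, hA.eigenvalues i ≤ q := by
    intro i
    set v : W → ℝ := (hA.eigenvectorBasis i).ofLp with hv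
    have hAv : A.mulVec v = hA.eigenvalues i • v := hA.mulVec_eigenvectorBasis i
    have hvv : ∑ x, v x * v x = 1 := by
      have := hA.eigenvectorBasis.orthonormal.1 i
      have h2 : ‖hA.eigenvectorBasis i‖ ^ 2 = 1 := by rw [this]; norm_num
      rw [EuclideanSpace.norm_sq_eq] at h2
      simpa [sq] using h2
    have hq : ∑ x, v x * (A.mulVec v) x = hA.eigenvalues i := by
      rw [hAv]
      simp only [Pi.smul_apply, smul_eq_mul]
      calc _ = hA.eigenvalues i * ∑ x, v x * v x := by
            rw [Finset.mul_sum]; exact Finset.sum_congr rfl fun x _ => by ring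
        _ = _ := by rw [hvv, mul_one]
    let S : Fin q → ℝ := fun c => ∑ x, if f x = c then v x else 0
    have hS1 : ∑ c, S c = ∑ x, v x := by
      simp only [S]
      rw [Finset.sum_comm]
      simp
    have hS2 : ∑ c, S c ^ 2 = ∑ x, ∑ y, v x * ((if f x = f y then 1 else 0) * v y) := by
      simp only [S, sq, Finset.sum_mul_sum]
      rw [Finset.sum_comm]
      refine Finset.sum_congr rfl fun x _ => ?_
      rw [Finset.sum_comm]
      refine Finset.sum_congr rfl fun y _ => ?_
      simp [ite_mul, eq_comm]
    have hform : ∑ x, v x * (A.mulVec v) x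
        = q * ∑ x, v x * v x - q * ∑ c, S c ^ 2 + (∑ x, v x) ^ 2 := by
      rw [hS2, sq, Finset.sum_mul_sum]
      simp only [Finset.mul_sum]
      rw [← Finset.sum_sub_distrib, ← Finset.sum_add_distrib]
      refine Finset.sum_congr rfl fun x _ => ?_
      have e : (q:ℝ) * (v x * v x) = ∑ y, v x * ((if x = y then (q:ℝ) else 0) * v y) := by
        simp; ring
      rw [e, ← Finset.sum_sub_distrib, ← Finset.sum_add_distrib]
      simp only [Matrix.mulVec, dotProduct, Finset.mul_sum]
      refine Finset.sum_congr rfl fun y _ => ?_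
      simp only [A, Matrix.of_apply]
      split_ifs <;> ring
    have hcs : (∑ c, S c) ^ 2 ≤ q * ∑ c, S c ^ 2 := by
      have := sq_sum_le_card_mul_sum_sq (s := (univ : Finset (Fin q))) (f := S)
      simpa using this
    rw [← hS1, hvv, hq] at hform
    linarith
  apply csSup_le
  · obtain ⟨w⟩ := ‹Nonempty W›
    exact ⟨_, {w}, by simp; omega, rfl⟩
  · rintro x ⟨s, hs, rfl⟩
    rw [min_eq_left hcard] at hs
    obtain ⟨w, rfl⟩ := Finset.card_eq_one.1 hs
    simpa using hl w

/-- clique on the vertices of `C`, all the others isolated -/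
def cliqueOn {V : Type*} (C : Finset V) : SimpleGraph V where
  Adj i j := i ≠ j ∧ i ∈ C ∧ j ∈ C
  symm := ⟨fun _ _ h => ⟨h.1.symm, h.2.2, h.2.1⟩⟩
  loopless := ⟨fun _ h => h.1 rfl⟩

lemma gtheta_two_ge {V : Type*} [Fintype V] [DecidableEq V] (C : Finset V) (m : ℕ)
    (hC : C.card = m + 2) (hC' : Cᶜ.card = m + 1) (α β : ℝ)
    (hα : α ^ 2 = 1 / ((m + 1) * (m + 2))) (hβ : β ^ 2 = m / (m + 1) ^ 2) :
    ((m + 2) * α + (m + 1) * β) ^ 2 ≤ gtheta 2 (cliqueOn C) := by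
  have hm : (0:ℝ) ≤ m := Nat.cast_nonneg m
  have hcard : 2 ≤ Fintype.card V := by
    have := Finset.card_le_univ C; omega
  let w : V → ℝ := fun i => if i ∈ C then α else β
  let a : ℝ := 1 / (m + 1)
  let b : ℝ := 1 / ((m + 1) * (m + 2))
  let Y : Matrix V V ℝ := Matrix.of fun i j =>
    (if i = j then (if i ∈ C then a else 0) else 0)
      - (if i ∈ C then 1 else 0) * (if j ∈ C then 1 else 0) * b + w i * w j
  have split : ∀ g : V → ℝ, ∑ i, g i = ∑ i ∈ C, g i + ∑ i ∈ Cᶜ, g i := fun g =>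
    (Finset.sum_add_sum_compl C g).symm
  have hYsymm : Y.IsHermitian := by
    ext i j
    by_cases h : i = j
    · subst h; simp
    · simp only [Matrix.conjTranspose_apply, Y, Matrix.of_apply, h, Ne.symm h, if_false, star_trivial]; ring
  have hw : ∀ x : V → ℝ, ∑ i, w i * x i = α * ∑ i ∈ C, x i + β * ∑ i ∈ Cᶜ, x i := by
    intro x
    rw [split, Finset.mul_sum, Finset.mul_sum]
    congr 1
    · exact Finset.sum_congr rfl fun i hi => by simp [w, hi]
    · exact Finset.sum_congr rfl fun i hi => by simp [w, Finset.mem_compl.1 hi]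
  have hYq : ∀ x : V → ℝ, ∑ i, ∑ j, x i * (Y i j * x j)
      = a * ∑ i ∈ C, x i ^ 2 - b * (∑ i ∈ C, x i) ^ 2
        + (α * ∑ i ∈ C, x i + β * ∑ i ∈ Cᶜ, x i) ^ 2 := by
    intro x
    rw [← hw]
    have e1 : a * ∑ i ∈ C, x i ^ 2 = ∑ i, ∑ j, if i = j then (if i ∈ C then a * x i * x j else 0) else 0 := by
      simp [Finset.mul_sum]
      exact Finset.sum_congr rfl fun i _ => by ring
    have e2 : ∑ i ∈ C, x i = ∑ i, (if i ∈ C then 1 else 0) * x i := by simp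
    rw [e1, e2, sq, sq, Finset.sum_mul_sum, Finset.sum_mul_sum, Finset.mul_sum,
      ← Finset.sum_sub_distrib, ← Finset.sum_add_distrib]
    refine Finset.sum_congr rfl fun i _ => ?_
    rw [Finset.mul_sum, ← Finset.sum_sub_distrib, ← Finset.sum_add_distrib]
    refine Finset.sum_congr rfl fun j _ => ?_
    simp only [Y, Matrix.of_apply]
    by_cases h : i = j
    · subst h
      by_cases h2 : i ∈ C <;> simp [h2] <;> ring
    · simp only [h, if_false]; ring
  have csC : ∀ x : V → ℝ, (∑ i ∈ C, x i) ^ 2 ≤ (m + 2) * ∑ i ∈ C, x i ^ 2 := by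
    intro x
    have := sq_sum_le_card_mul_sum_sq (s := C) (f := x)
    rw [hC] at this; push_cast at this; exact this
  have csD : ∀ x : V → ℝ, (∑ i ∈ Cᶜ, x i) ^ 2 ≤ (m + 1) * ∑ i ∈ Cᶜ, x i ^ 2 := by
    intro x
    have := sq_sum_le_card_mul_sum_sq (s := Cᶜ) (f := x)
    rw [hC'] at this; push_cast at this; exact this
  have hab : a = (m + 2) * b := by simp only [a, b]; field_simp
  have hb0 : 0 ≤ b := by positivity
  have ha1 : a ≤ 1 := by
    simp only [a]; rw [div_le_one (by positivity)]; linarith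
  have hquad : ∀ (Z : Matrix V V ℝ) (x : V → ℝ),
      star x ⬝ᵥ Z.mulVec x = ∑ i, ∑ j, x i * (Z i j * x j) := by
    intro Z x
    simp [dotProduct, Matrix.mulVec, Finset.mul_sum]
  have hY0 : Y.PosSemidef := by
    refine Matrix.PosSemidef.of_dotProduct_mulVec_nonneg hYsymm fun x => ?_
    rw [hquad, hYq, hab]
    nlinarith [mul_nonneg hb0 (sub_nonneg.2 (csC x)),
      sq_nonneg (α * ∑ i ∈ C, x i + β * ∑ i ∈ Cᶜ, x i)]
  have hY1 : (1 - Y).PosSemidef := by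
    refine Matrix.PosSemidef.of_dotProduct_mulVec_nonneg
      (Matrix.isHermitian_one.sub hYsymm) fun x => ?_
    have e : star x ⬝ᵥ (1 - Y).mulVec x = ∑ i, x i ^ 2 - ∑ i, ∑ j, x i * (Y i j * x j) := by
      rw [Matrix.sub_mulVec, dotProduct_sub, hquad Y, Matrix.one_mulVec]
      simp [dotProduct, sq]
    rw [e, hYq, split]
    have h1 := csC x
    have h2 := csD x
    set P := ∑ i ∈ C, x i ^ 2
    set R := ∑ i ∈ Cᶜ, x i ^ 2
    set X := ∑ i ∈ C, x i
    set T := ∑ i ∈ Cᶜ, x i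
    have h1' : X ^ 2 / (m + 2) ≤ P := by
      rw [div_le_iff₀ (by positivity)]; linarith
    have h2' : T ^ 2 / (m + 1) ≤ R := by
      rw [div_le_iff₀ (by positivity)]; linarith
    have h3 : (α * X + β * T) ^ 2 ≤ X ^ 2 / (m + 2) + T ^ 2 / (m + 1) := by
      have key : X ^ 2 / (m + 2) + T ^ 2 / (m + 1) - (α * X + β * T) ^ 2
          = ((m + 1) * (m + 2)) * (β * X / (m + 2) - α * T / (m + 1)) ^ 2 := by
        have : X ^ 2 / (m + 2) + T ^ 2 / (m + 1) - (α * X + β * T) ^ 2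
          - ((m + 1) * (m + 2)) * (β * X / (m + 2) - α * T / (m + 1)) ^ 2
          = X ^ 2 / (m + 2) + T ^ 2 / (m + 1) - α ^ 2 * X ^ 2 - β ^ 2 * T ^ 2
            - (m + 1) / (m + 2) * β ^ 2 * X ^ 2 - (m + 2) / (m + 1) * α ^ 2 * T ^ 2 := by
          field_simp
          ring
        rw [hα, hβ] at this
        have z : X ^ 2 / (m + 2) + T ^ 2 / (m + 1) - 1 / ((m + 1) * (m + 2) : ℝ) * X ^ 2
            - m / (m + 1 : ℝ) ^ 2 * T ^ 2
            - (m + 1) / (m + 2) * (m / (m + 1 : ℝ) ^ 2) * X ^ 2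
            - (m + 2) / (m + 1) * (1 / ((m + 1) * (m + 2) : ℝ)) * T ^ 2 = 0 := by
          field_simp
          ring
        linarith
      have : 0 ≤ ((m + 1) * (m + 2)) * (β * X / (m + 2) - α * T / (m + 1)) ^ 2 := by
        positivity
      linarith
    have h4 : b * X ^ 2 = a * (X ^ 2 / (m + 2)) := by
      rw [hab]; field_simp
    rw [h4]
    nlinarith [mul_nonneg (sub_nonneg.2 ha1) (sub_nonneg.2 h1')]
  have ht : Y.trace = 2 := by
    rw [Matrix.trace, split]
    have t1 : ∑ i ∈ C, Y.diag i = ∑ i ∈ C, (a - b + α ^ 2) :=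
      Finset.sum_congr rfl fun i hi => by simp [Y, w, hi]; ring
    have t2 : ∑ i ∈ Cᶜ, Y.diag i = ∑ i ∈ Cᶜ, β ^ 2 :=
      Finset.sum_congr rfl fun i hi => by simp [Y, w, Finset.mem_compl.1 hi]; ring
    rw [t1, t2, Finset.sum_const, Finset.sum_const, hC, hC', hα, hβ]
    simp only [a, b, nsmul_eq_mul]
    push_cast
    field_simp
    ring
  apply le_csInf (gtheta_nonempty 2 _)
  rintro x ⟨A, hA, h1, rfl⟩
  refine le_trans (le_of_eq ?_) (weak_duality A hA Y hcard hY0 hY1 ht)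
  have hz : (A * Y).trace = ∑ i, ∑ j, 1 * (Y i j * 1) := by
    simp only [Matrix.trace, Matrix.diag, Matrix.mul_apply]
    refine Finset.sum_congr rfl fun i _ => Finset.sum_congr rfl fun j _ => ?_
    have hs : Y j i = Y i j := by
      have := hYsymm.apply i j
      simpa using this
    rw [hs]
    by_cases h : (cliqueOn C).Adj i j
    · obtain ⟨h2, h3, h4⟩ := h
      have : Y i j = 0 := by
        have hb : α * α = b := by rw [← sq, hα]
        simp [Y, w, h2, h3, h4, hb]
      simp [this]
    · rw [h1 i j h]; ring
  rw [hz, hYq (fun _ => 1), hab]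
  simp [hC, hC']
  ring

theorem stmt_12 (M : ℝ) (hM : 0 ≤ M) :
    ∃ (n k : ℕ) (G : SimpleGraph (Fin n)), 0 < k ∧
      M ≤ gtheta k G -
          gtheta 1 (SimpleGraph.boxProd (⊤ : SimpleGraph (Fin k)) G) := by
  obtain ⟨t, ht⟩ := exists_nat_ge (M + 2)
  obtain ⟨m, hm⟩ : ∃ m : ℕ, m = t ^ 2 := ⟨_, rfl⟩
  have hmt : (m:ℝ) = (t:ℝ) ^ 2 := by rw [hm]; push_cast; rfl
  have hm0 : (0:ℝ) ≤ m := Nat.cast_nonneg m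
  have ht0 : (0:ℝ) ≤ t := Nat.cast_nonneg t
  let C : Finset (Fin (2 * m + 3)) := univ.filter fun i => i.val < m + 2
  have hC : C.card = m + 2 := by
    simp only [C]
    rw [Fin.card_filter_val_lt]; omega
  have hC' : Cᶜ.card = m + 1 := by
    rw [Finset.card_compl, hC, Fintype.card_fin]; omega
  refine ⟨2 * m + 3, 2, cliqueOn C, by norm_num, ?_⟩
  have hup : gtheta 1 (SimpleGraph.boxProd (⊤ : SimpleGraph (Fin 2)) (cliqueOn C))
      ≤ ((m + 3 : ℕ) : ℝ) := by
    refine gtheta_one_le _ (m + 3) (fun p => if h : p.2.val < m + 2 then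
      ⟨p.1.val, by omega⟩ else ⟨p.2.val - m, by omega⟩) ?_
    rintro ⟨x, i⟩ ⟨y, j⟩ hne heq
    rw [SimpleGraph.boxProd_adj]
    simp only [SimpleGraph.top_adj, cliqueOn, C, mem_filter, mem_univ, true_and]
    simp only [ne_eq, Prod.mk.injEq, not_and] at hne
    dsimp only at heq
    split_ifs at heq with h1 h2 h2 <;> simp only [Fin.mk.injEq] at heq
    · have : x = y := Fin.ext heq
      exact Or.inr ⟨⟨hne this, h1, h2⟩, this⟩
    · omega
    · omega
    · have : i = j := Fin.ext (by omega)
      exact Or.inl ⟨fun h => hne h this, this⟩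
  have hlow := gtheta_two_ge C m hC hC' (Real.sqrt (1 / ((m + 1) * (m + 2))))
    (Real.sqrt (m / (m + 1) ^ 2)) (Real.sq_sqrt (by positivity)) (Real.sq_sqrt (by positivity))
  set α := Real.sqrt (1 / ((m + 1 : ℝ) * (m + 2)))
  set β := Real.sqrt (m / (m + 1 : ℝ) ^ 2)
  have hα : α ^ 2 = 1 / ((m + 1 : ℝ) * (m + 2)) := Real.sq_sqrt (by positivity)
  have hβ : β ^ 2 = m / (m + 1 : ℝ) ^ 2 := Real.sq_sqrt (by positivity)
  have hα0 : 0 ≤ α := Real.sqrt_nonneg _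
  have hβ0 : 0 ≤ β := Real.sqrt_nonneg _
  have hprod : (t:ℝ) ≤ (m + 2) * (m + 1) * (α * β) := by
    refine (sq_le_sq₀ ht0 (by positivity)).1 ?_
    rw [← hmt]
    have : ((m + 2) * (m + 1) * (α * β)) ^ 2 = (m + 2) * m / (m + 1 : ℝ) := by
      rw [mul_pow, mul_pow α β, hα, hβ]; field_simp
    rw [this, le_div_iff₀ (by positivity)]
    nlinarith
  have e : ((m + 2) * α + (m + 1) * β) ^ 2
      = (m + 2) / (m + 1 : ℝ) + m + 2 * ((m + 2) * (m + 1) * (α * β)) := by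
    have : ((m + 2) * α + (m + 1) * β) ^ 2
      = (m + 2) ^ 2 * α ^ 2 + (m + 1) ^ 2 * β ^ 2 + 2 * ((m + 2) * (m + 1) * (α * β)) := by ring
    rw [this, hα, hβ]; field_simp
  have h1 : 1 ≤ (m + 2) / (m + 1 : ℝ) := by
    rw [le_div_iff₀ (by positivity)]; linarith
  push_cast at hup
  linarith
end
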